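/- Let k be a field and A a commutative k-bialgebra. Let S₁ and S₂ be Hopf subalgebras of A, and let S₁·S₂ denote the k-linear span of all products s₁s₂ with s₁ ∈ S₁ and s₂ ∈ S₂ (equivalently, the image of the multiplication map S₁ ⊗_k S₂ → A). Then S₁·S₂ is a k-subalgebra of A and is a Hopf subalgebra of A containing both S₁ and S₂. Consequently, the set of Hopf subalgebras of A is directed under inclusion, and the union of all Hopf subalgebras of A is itself a Hopf subalgebra of A, the largest one. -/

import Mathlib

open TensorProduct

/-- A Hopf subalgebra of a `k`-bialgebra `A`: a subalgebra `S` such that the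
comultiplication of `A` restricts to `S` (i.e. `Δ` maps `S` into the image of
`S ⊗ S → A ⊗ A`, witnessed by a lift `comulS`), and such that there is a `k`-linear
antipode `σ : S → S` satisfying the antipode identities
`m ∘ (σ ⊗ id) ∘ Δ = η ∘ ε = m ∘ (id ⊗ σ) ∘ Δ` on `S`. -/
def IsHopfSubalgebra {k A : Type*} [CommRing k] [Ring A] [Bialgebra k A]
    (S : Subalgebra k A) : Prop :=
  ∃ (comulS : S →ₗ[k] S ⊗[k] S) (σ : S →ₗ[k] S),
    (∀ s : S, TensorProduct.map S.val.toLinearMap S.val.toLinearMap (comulS s)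
        = Coalgebra.comul (R := k) (s : A)) ∧
    (∀ s : S, LinearMap.mul' k S (TensorProduct.map σ LinearMap.id (comulS s))
        = algebraMap k S (Coalgebra.counit (R := k) (s : A))) ∧
    (∀ s : S, LinearMap.mul' k S (TensorProduct.map LinearMap.id σ (comulS s))
        = algebraMap k S (Coalgebra.counit (R := k) (s : A)))

/-!
The image in `A` of a coalgebra `C` under a convolution-invertible coalgebra map `p : C → A` is a
subcoalgebra, and it has an antipode as soon as the convolution inverse `g` of `p` kills `ker p`.
It does: an element `x` of `C` lies in a finitely generated right coideal, on which convolution by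
`g` acts as a matrix over the commutative ring `A`, so Cayley–Hamilton makes a monic polynomial in
`g` vanish at `x`. Multiplying that relation by powers of `p` writes `g x` as an `A`-linear
combination of the values `p ^ m` at `x`, and `p ^ m = id ^ m ∘ p` because `p` is a coalgebra map.
This applies to `S₁ ⊗ S₂`, with image `S₁ S₂`, and to the direct sum of all Hopf subalgebras.
-/

open WithConv Polynomial

section Convolution

variable {k C A B : Type*} [CommSemiring k] [AddCommMonoid C] [Module k C] [Coalgebra k C]
  [Semiring A] [Algebra k A]

theorem conv_pow_comp_coalgHom [AddCommMonoid B] [Module k B] [Coalgebra k B]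
    (f : WithConv (B →ₗ[k] A)) (p : C →ₗc[k] B) (n : ℕ) :
    toConv (f.ofConv ∘ₗ (p : C →ₗ[k] B)) ^ n = toConv ((f ^ n).ofConv ∘ₗ (p : C →ₗ[k] B)) := by
  induction n with
  | zero => ext; simp
  | succ n ih =>
    rw [pow_succ, pow_succ, ih]
    exact congrArg toConv (LinearMap.convMul_comp_coalgHom_distrib _ _ p).symm

theorem conv_algHom_comp_eq_one [Semiring B] [Algebra k B] (φ : A →ₐ[k] B) {f g : C →ₗ[k] A}
    (h : toConv f * toConv g = 1) :
    toConv (φ.toLinearMap ∘ₗ f) * toConv (φ.toLinearMap ∘ₗ g) = 1 := by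
  ext x
  refine congr($(LinearMap.algHom_comp_convMul_distrib φ (toConv f) (toConv g)) x).symm.trans ?_
  exact (congrArg φ congr($h x)).trans (φ.commutes _)

theorem conv_eq_one_of_algHom_comp [Semiring B] [Algebra k B] {φ : A →ₐ[k] B}
    (hφ : Function.Injective φ) {f g : C →ₗ[k] A}
    (h : toConv (φ.toLinearMap ∘ₗ f) * toConv (φ.toLinearMap ∘ₗ g) = 1) :
    toConv f * toConv g = 1 := by
  ext x
  refine hφ (.trans ?_ (congr($h x).trans (φ.commutes _).symm))
  exact congr($(LinearMap.algHom_comp_convMul_distrib φ (toConv f) (toConv g)) x)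

end Convolution

section CayleyHamilton

variable {k C A ι : Type*} [AddCommMonoid C]

theorem exists_mem_span_comul_eq_sum [CommSemiring k] [Module k C] [Coalgebra k C]
    (b : Module.Basis ι k C) (x : C) :
    ∃ (s : Finset ι) (v : s → C) (c : Matrix s s C), x ∈ Submodule.span k (Set.range v) ∧
      ∀ j, Coalgebra.comul (R := k) (v j) = ∑ i, v i ⊗ₜ[k] c i j := by
  classical
  obtain ⟨u, hu⟩ := TensorProduct.eq_repr_basis_right b (Coalgebra.comul (R := k) x)
  have comul_x : Coalgebra.comul (R := k) x = ∑ i : u.support, u i ⊗ₜ[k] b i := by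
    rw [← hu, Finsupp.sum, ← Finset.sum_coe_sort]
  let contract (i : ι) : C ⊗[k] C →ₗ[k] C := TensorProduct.rid k C ∘ₗ (b.coord i).lTensor C
  refine ⟨u.support, fun i => u i, fun i j => contract j (Coalgebra.comul (b i)), ?_, ?_⟩
  · have x_eq : x = ∑ i : u.support, Coalgebra.counit (R := k) (b i) • u i := by
      have := congr(TensorProduct.rid k C ($(Coalgebra.lTensor_counit_comul (R := k) x)))
      simpa [comul_x] using this.symm
    rw [x_eq]
    exact sum_mem fun i _ => Submodule.smul_mem _ _ (Submodule.subset_span ⟨i, rfl⟩)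
  · intro j
    have contract_assoc (y : C ⊗[k] C) (i : ι) :
        (contract j).lTensor C (TensorProduct.assoc k C C C (y ⊗ₜ b i)) = b.coord j (b i) • y := by
      induction y with
      | zero => simp
      | add y z hy hz => rw [add_tmul, map_add, map_add, hy, hz, smul_add]
      | tmul y z => simp [contract]
    have coassoc_x := congr((contract j).lTensor C $(Coalgebra.coassoc_apply (R := k) x))
    simpa [comul_x, contract_assoc, Finsupp.single_apply, Subtype.coe_inj] using coassoc_x

variable [CommRing A]

theorem conv_mul_aeval_apply [CommSemiring k] [Module k C] [Coalgebra k C] [Algebra k A]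
    [Fintype ι] [DecidableEq ι] {v : ι → C} {c : Matrix ι ι C}
    (hv : ∀ j, Coalgebra.comul (R := k) (v j) = ∑ i, v i ⊗ₜ[k] c i j)
    (f g : WithConv (C →ₗ[k] A)) (P : A[X]) :
    (fun j => (f * aeval g P) (v j)) = Matrix.vecMul (fun i => f (v i)) (aeval (c.map g) P) := by
  have conv_mul_apply (f : WithConv (C →ₗ[k] A)) :
      (fun j => (f * g) (v j)) = Matrix.vecMul (fun i => f (v i)) (c.map g) := by
    ext j
    simp [hv, Matrix.vecMul, dotProduct]
  induction P using Polynomial.induction_on with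
  | C a =>
    rw [aeval_C, aeval_C, Algebra.algebraMap_eq_smul_one, Algebra.algebraMap_eq_smul_one,
      mul_smul_comm, mul_one, Matrix.vecMul_smul, Matrix.vecMul_one]
    rfl
  | add P Q hP hQ =>
    simp only [map_add, mul_add, Matrix.vecMul_add, ← hP, ← hQ]
    rfl
  | monomial n a h =>
    rw [pow_succ, ← mul_assoc, map_mul _ _ X, map_mul _ _ X, aeval_X, aeval_X, ← mul_assoc,
      conv_mul_apply, h, Matrix.vecMul_vecMul]

variable [CommSemiring k] [Module k C] [Coalgebra k C] [Module.Free k C]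

theorem exists_monic_conv_mul_aeval_apply_eq_zero [Algebra k A] (g : WithConv (C →ₗ[k] A)) (x : C) :
    ∃ P : A[X], P.Monic ∧ ∀ f : WithConv (C →ₗ[k] A), (f * aeval g P) x = 0 := by
  classical
  obtain ⟨s, v, c, hx, hv⟩ := exists_mem_span_comul_eq_sum (Module.Free.chooseBasis k C) x
  let Q := c.map g
  refine ⟨Q.charpoly, Q.charpoly_monic, fun f => ?_⟩
  have vanish : Set.range v ⊆ LinearMap.ker (f * aeval g Q.charpoly).ofConv := by
    rintro _ ⟨j, rfl⟩
    have := congrFun (conv_mul_aeval_apply hv f g Q.charpoly) j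
    rwa [Matrix.aeval_self_charpoly, Matrix.vecMul_zero] at this
  exact Submodule.span_le.mpr vanish hx

theorem apply_eq_zero_of_conv_mul_eq_one [Algebra k A] {p g : WithConv (C →ₗ[k] A)}
    (h : p * g = 1) {x : C} (hx : ∀ m, (p ^ m) x = 0) : g x = 0 := by
  obtain ⟨P, P_monic, hP⟩ := exists_monic_conv_mul_aeval_apply_eq_zero g x
  set n := P.natDegree with hn
  have lower_terms : ∀ i ∈ Finset.range n, (p ^ n * g * (P.coeff i • g ^ i)) x = 0 := by
    intro i hi
    have cancel : p ^ n * g * g ^ i = p ^ (n - (i + 1)) := by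
      rw [mul_assoc, ← pow_succ', ← Nat.sub_add_cancel (Finset.mem_range.mp hi), pow_add, mul_assoc,
        pow_mul_pow_eq_one _ h, mul_one, Nat.add_sub_cancel]
    rw [mul_smul_comm, cancel]
    exact (congrArg (P.coeff i • ·) (hx _)).trans (smul_zero _)
  have leading_term : p ^ n * g * g ^ n = g := by
    rw [mul_assoc, ← pow_succ', pow_succ, ← mul_assoc, pow_mul_pow_eq_one _ h, one_mul]
  have relation := hP (p ^ n * g)
  rw [aeval_eq_sum_range, ← hn, Finset.sum_range_succ, P_monic.coeff_natDegree, one_smul, mul_add,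
    leading_term, Finset.mul_sum] at relation
  simpa only [ofConv_add, ofConv_sum, LinearMap.add_apply, LinearMap.sum_apply,
    Finset.sum_eq_zero lower_terms, zero_add] using relation

theorem ker_le_ker_of_conv_mul_eq_one [Bialgebra k A] {p : C →ₗc[k] A} {g : C →ₗ[k] A}
    (h : toConv (p : C →ₗ[k] A) * toConv g = 1) :
    LinearMap.ker (p : C →ₗ[k] A) ≤ LinearMap.ker g := by
  intro x hx
  refine apply_eq_zero_of_conv_mul_eq_one h fun m => ?_
  have pow_eq := conv_pow_comp_coalgHom (toConv (LinearMap.id : A →ₗ[k] A)) p m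
  rw [ofConv_toConv, LinearMap.id_comp] at pow_eq
  rw [pow_eq]
  exact LinearMap.ker_le_ker_comp _ _ hx

end CayleyHamilton

/-- The coalgebra structure on a flat module `M` that makes the injective map `v : M → C` into a
flat coalgebra a coalgebra map, given a lift `Δ` of the comultiplication of `C`. It restricts the
coalgebra structure of a Hopf subalgebra to the subalgebra itself. -/
noncomputable abbrev coalgebraOfInjective {k M C : Type*} [CommRing k] [AddCommGroup M]
    [Module k M] [Module.Flat k M] [AddCommGroup C] [Module k C] [Module.Flat k C] [Coalgebra k C]
    (v : M →ₗ[k] C) (hv : Function.Injective v) (Δ : M →ₗ[k] M ⊗[k] M)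
    (hΔ : TensorProduct.map v v ∘ₗ Δ = Coalgebra.comul ∘ₗ v) : Coalgebra k M where
  comul := Δ
  counit := Coalgebra.counit ∘ₗ v
  coassoc := by
    have inj : Function.Injective (TensorProduct.map v (TensorProduct.map v v)) :=
      TensorProduct.map_injective_of_flat_flat _ _ hv
        (TensorProduct.map_injective_of_flat_flat _ _ hv hv)
    rw [← LinearMap.cancel_left inj, ← LinearMap.comp_assoc, TensorProduct.map_map_comp_assoc_eq,
      LinearMap.comp_assoc, ← LinearMap.comp_assoc Δ (LinearMap.rTensor _ _),
      LinearMap.map_comp_rTensor, hΔ, ← LinearMap.comp_assoc Δ (LinearMap.lTensor _ _),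
      LinearMap.map_comp_lTensor, hΔ, ← LinearMap.rTensor_comp_map,
      ← LinearMap.lTensor_comp_map, LinearMap.comp_assoc, LinearMap.comp_assoc, hΔ]
    simp only [← LinearMap.comp_assoc]
    rw [← Coalgebra.coassoc]
    rfl
  rTensor_counit_comp_comul := by
    have inj : Function.Injective (v.lTensor k) :=
      Module.Flat.lTensor_preserves_injective_linearMap v hv
    rw [← LinearMap.cancel_left inj, ← LinearMap.comp_assoc, LinearMap.lTensor_comp_rTensor,
      ← LinearMap.rTensor_comp_map, LinearMap.comp_assoc, hΔ, ← LinearMap.comp_assoc,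
      Coalgebra.rTensor_counit_comp_comul]
    ext; simp
  lTensor_counit_comp_comul := by
    have inj : Function.Injective (v.rTensor k) :=
      Module.Flat.rTensor_preserves_injective_linearMap v hv
    rw [← LinearMap.cancel_left inj, ← LinearMap.comp_assoc, LinearMap.rTensor_comp_lTensor,
      ← LinearMap.lTensor_comp_map, LinearMap.comp_assoc, hΔ, ← LinearMap.comp_assoc,
      Coalgebra.lTensor_counit_comp_comul]
    ext; simp

section TensorProduct

variable {k C₁ C₂ A : Type*} [CommSemiring k] [AddCommMonoid C₁] [Module k C₁] [AddCommMonoid C₂]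
  [Module k C₂]

theorem range_mul'_comp_map [Semiring A] [Algebra k A] (f : C₁ →ₗ[k] A) (g : C₂ →ₗ[k] A) :
    LinearMap.range (LinearMap.mul' k A ∘ₗ TensorProduct.map f g) =
      LinearMap.range f * LinearMap.range g := by
  rw [LinearMap.range_comp, TensorProduct.range_map, Submodule.map_map₂, Submodule.mul_eq_map₂]
  rfl

theorem conv_mul'_comp_map_eq_one [Coalgebra k C₁] [Coalgebra k C₂] [CommSemiring A] [Algebra k A]
    {f₁ g₁ : C₁ →ₗ[k] A} {f₂ g₂ : C₂ →ₗ[k] A}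
    (h₁ : toConv f₁ * toConv g₁ = 1) (h₂ : toConv f₂ * toConv g₂ = 1) :
    toConv (LinearMap.mul' k A ∘ₗ TensorProduct.map f₁ f₂) *
      toConv (LinearMap.mul' k A ∘ₗ TensorProduct.map g₁ g₂) = 1 := by
  refine conv_algHom_comp_eq_one (Algebra.TensorProduct.lmul' k (S := A)) ?_
  have map_conv := TensorProduct.map_convMul_map (f := toConv f₁) (h := toConv g₁)
    (g := toConv f₂) (k := toConv g₂)
  rw [h₁, h₂] at map_conv
  refine map_conv.trans ?_
  ext x y
  simp [Algebra.algebraMap_eq_smul_one, ← smul_tmul', smul_smul, mul_comm,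
    Algebra.TensorProduct.one_def]

end TensorProduct

section DirectSum

variable {k A ι : Type*} {C : ι → Type*} [DecidableEq ι] [CommSemiring k]
  [∀ i, AddCommMonoid (C i)] [∀ i, Module k (C i)]

theorem dfinsuppLsum_comp_lsingle [AddCommMonoid A] [Module k A] (f : ∀ i, C i →ₗ[k] A) (i : ι) :
    DFinsupp.lsum k f ∘ₗ DFinsupp.lsingle i = f i := by
  ext; simp

theorem range_dfinsuppLsum [AddCommMonoid A] [Module k A] (f : ∀ i, C i →ₗ[k] A) :
    LinearMap.range (DFinsupp.lsum k f) = ⨆ i, LinearMap.range (f i) := by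
  refine le_antisymm ?_ (iSup_le fun i => ?_)
  · rintro _ ⟨x, rfl⟩
    rw [DFinsupp.lsum_apply_apply]
    exact Submodule.dfinsuppSumAddHom_mem _ _ _ fun i _ =>
      Submodule.mem_iSup_of_mem i (LinearMap.mem_range_self (f i) _)
  · rw [← dfinsuppLsum_comp_lsingle f i]
    exact LinearMap.range_comp_le_range _ _

variable [∀ i, Coalgebra k (C i)]

theorem conv_dfinsuppLsum_eq_one [Semiring A] [Algebra k A] {f g : ∀ i, C i →ₗ[k] A}
    (h : ∀ i, toConv (f i) * toConv (g i) = 1) :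
    toConv (DFinsupp.lsum k f) * toConv (DFinsupp.lsum k g) = 1 := by
  ext i x
  have hi := congr($(h i) x)
  simp only [LinearMap.convMul_apply, LinearMap.convOne_apply] at hi
  simpa [TensorProduct.map_map, dfinsuppLsum_comp_lsingle] using hi

/-- The coalgebra map out of the direct sum of a family of coalgebras induced by coalgebra maps
`p i` out of the summands. -/
noncomputable def dfinsuppLsumCoalgHom [AddCommMonoid A] [Module k A] [Coalgebra k A]
    (p : ∀ i, C i →ₗc[k] A) : (Π₀ i, C i) →ₗc[k] A where
  toLinearMap := DFinsupp.lsum k fun i => (p i : C i →ₗ[k] A)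
  counit_comp := by ext; simp
  map_comp_comul := by
    ext i x
    simp [TensorProduct.map_map, dfinsuppLsum_comp_lsingle]

end DirectSum

/-- A presentation of a submodule `V` of a bialgebra as the image of a coalgebra map `C → A` that
is invertible under convolution, with inverse also landing in `V`. Unlike Hopf subalgebras, such
presentations are visibly closed under products and sums of the submodules `V`. -/
structure HopfCover {k A : Type*} [CommSemiring k] [Semiring A] [Bialgebra k A] (C : Type*)
    [AddCommMonoid C] [Module k C] [Coalgebra k C] (V : Submodule k A) where
  toCoalgHom : C →ₗc[k] A
  inv : C →ₗ[k] A
  conv_mul_inv : toConv (toCoalgHom : C →ₗ[k] A) * toConv inv = 1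
  inv_conv_mul : toConv inv * toConv (toCoalgHom : C →ₗ[k] A) = 1
  range_toCoalgHom : LinearMap.range (toCoalgHom : C →ₗ[k] A) = V
  range_inv_le : LinearMap.range inv ≤ V

namespace HopfCover

/-- The cover of a product of submodules by the tensor product of their covers. -/
noncomputable def mul {k A C₁ C₂ : Type*} [CommSemiring k] [CommSemiring A] [Bialgebra k A]
    [AddCommMonoid C₁] [Module k C₁] [Coalgebra k C₁] [AddCommMonoid C₂] [Module k C₂]
    [Coalgebra k C₂] {V₁ V₂ : Submodule k A} (P₁ : HopfCover C₁ V₁) (P₂ : HopfCover C₂ V₂) :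
    HopfCover (C₁ ⊗[k] C₂) (V₁ * V₂) where
  toCoalgHom := (Bialgebra.mulCoalgHom k A).comp
    (Coalgebra.TensorProduct.map P₁.toCoalgHom P₂.toCoalgHom)
  inv := LinearMap.mul' k A ∘ₗ TensorProduct.map P₁.inv P₂.inv
  conv_mul_inv := conv_mul'_comp_map_eq_one P₁.conv_mul_inv P₂.conv_mul_inv
  inv_conv_mul := conv_mul'_comp_map_eq_one P₁.inv_conv_mul P₂.inv_conv_mul
  range_toCoalgHom := (range_mul'_comp_map _ _).trans
    congr($P₁.range_toCoalgHom * $P₂.range_toCoalgHom)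
  range_inv_le := (range_mul'_comp_map _ _).trans_le (mul_le_mul' P₁.range_inv_le P₂.range_inv_le)

/-- The cover of a sum of submodules by the direct sum of their covers. -/
noncomputable def iSup {k A ι : Type*} {C : ι → Type*} [CommSemiring k] [Semiring A]
    [Bialgebra k A] [DecidableEq ι] [∀ i, AddCommMonoid (C i)] [∀ i, Module k (C i)]
    [∀ i, Coalgebra k (C i)] {V : ι → Submodule k A} (P : ∀ i, HopfCover (C i) (V i)) :
    HopfCover (Π₀ i, C i) (⨆ i, V i) where
  toCoalgHom := dfinsuppLsumCoalgHom fun i => (P i).toCoalgHom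
  inv := DFinsupp.lsum k fun i => (P i).inv
  conv_mul_inv := conv_dfinsuppLsum_eq_one fun i => (P i).conv_mul_inv
  inv_conv_mul := conv_dfinsuppLsum_eq_one fun i => (P i).inv_conv_mul
  range_toCoalgHom := (range_dfinsuppLsum _).trans (iSup_congr fun i => (P i).range_toCoalgHom)
  range_inv_le := (range_dfinsuppLsum _).trans_le (iSup_mono fun i => (P i).range_inv_le)

theorem isHopfSubalgebra {k A C : Type*} [CommRing k] [CommRing A] [Bialgebra k A]
    [AddCommGroup C] [Module k C] [Coalgebra k C] [Module.Free k C] {S : Subalgebra k A}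
    [Module.Projective k S] (P : HopfCover C (Subalgebra.toSubmodule S)) :
    IsHopfSubalgebra S := by
  obtain ⟨p, g, hpg, hgp, hp, hg⟩ := P
  let pS : C →ₗ[k] S := LinearMap.codRestrict (Subalgebra.toSubmodule S) p fun c => hp.le ⟨c, rfl⟩
  let gS : C →ₗ[k] S := LinearMap.codRestrict (Subalgebra.toSubmodule S) g fun c => hg ⟨c, rfl⟩
  have val_inj : Function.Injective S.val := Subtype.val_injective
  have left : toConv gS * toConv pS = 1 := conv_eq_one_of_algHom_comp val_inj hgp
  have right : toConv pS * toConv gS = 1 := conv_eq_one_of_algHom_comp val_inj hpg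
  have pS_surj : Function.Surjective pS := by
    rintro ⟨a, ha⟩
    obtain ⟨c, hc⟩ := hp.ge ha
    exact ⟨c, Subtype.ext hc⟩
  obtain ⟨s, hs⟩ := Module.projective_lifting_property pS LinearMap.id pS_surj
  have p_s (a : S) : p (s a) = a := congrArg Subtype.val (LinearMap.congr_fun hs a)
  have gS_s_pS : (gS ∘ₗ s) ∘ₗ pS = gS := by
    ext c
    have mem_ker : s (pS c) - c ∈ LinearMap.ker (p : C →ₗ[k] A) :=
      LinearMap.sub_mem_ker_iff.mpr (p_s (pS c))
    exact LinearMap.sub_mem_ker_iff.mp (ker_le_ker_of_conv_mul_eq_one hpg mem_ker)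
  have counit_s (a : S) : Coalgebra.counit (R := k) (s a) = Coalgebra.counit (R := k) (a : A) := by
    rw [← p_s a]
    exact (CoalgHomClass.counit_comp_apply p (s a)).symm
  refine ⟨TensorProduct.map pS pS ∘ₗ Coalgebra.comul ∘ₗ s, gS ∘ₗ s, fun a => ?comul_lift,
    fun a => ?antipode_left, fun a => ?antipode_right⟩
  case comul_lift =>
    rw [← p_s a, ← CoalgHomClass.map_comp_comul_apply, LinearMap.comp_apply, TensorProduct.map_map]
    rfl
  case antipode_left =>
    rw [← counit_s, ← LinearMap.convOne_apply, ← left, LinearMap.comp_apply,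
      TensorProduct.map_map, gS_s_pS]
    rfl
  case antipode_right =>
    rw [← counit_s, ← LinearMap.convOne_apply, ← right, LinearMap.comp_apply,
      TensorProduct.map_map, gS_s_pS]
    rfl

end HopfCover

theorem toSubmodule_iSup_of_directed {k A ι : Type*} [CommSemiring k] [Semiring A] [Algebra k A]
    [Nonempty ι] {S : ι → Subalgebra k A} (dir : Directed (· ≤ ·) S) :
    Subalgebra.toSubmodule (⨆ i, S i) = ⨆ i, Subalgebra.toSubmodule (S i) :=
  SetLike.coe_injective <| (Subalgebra.coe_iSup_of_directed dir).trans
    (Submodule.coe_iSup_of_directed (fun i => Subalgebra.toSubmodule (S i)) dir).symm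

namespace IsHopfSubalgebra

theorem exists_hopfCover {k A : Type*} [CommRing k] [Ring A] [Bialgebra k A] [Module.Flat k A]
    {S : Subalgebra k A} [Module.Flat k S] (hS : IsHopfSubalgebra S) :
    ∃ _ : Coalgebra k S, Nonempty (HopfCover S (Subalgebra.toSubmodule S)) := by
  obtain ⟨Δ, σ, hΔ, hσ, hσ'⟩ := hS
  let : Coalgebra k S :=
    coalgebraOfInjective S.val.toLinearMap Subtype.val_injective Δ (LinearMap.ext hΔ)
  let p : S →ₗc[k] A :=
    { S.val.toLinearMap with counit_comp := rfl, map_comp_comul := LinearMap.ext hΔ }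
  have p_eq : (p : S →ₗ[k] A) = S.val.toLinearMap := rfl
  have left : toConv σ * toConv (LinearMap.id : S →ₗ[k] S) = 1 := by
    ext s; exact congrArg Subtype.val (hσ s)
  have right : toConv (LinearMap.id : S →ₗ[k] S) * toConv σ = 1 := by
    ext s; exact congrArg Subtype.val (hσ' s)
  refine ⟨_, ⟨p, S.val.toLinearMap ∘ₗ σ, ?_, ?_, ?_, ?_⟩⟩
  · simpa only [p_eq, LinearMap.comp_id] using conv_algHom_comp_eq_one S.val right
  · simpa only [p_eq, LinearMap.comp_id] using conv_algHom_comp_eq_one S.val left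
  · exact Submodule.range_subtype (Subalgebra.toSubmodule S)
  · rintro _ ⟨s, rfl⟩
    exact (σ s).2

variable {k A : Type*} [Field k] [CommRing A] [Bialgebra k A]

theorem sup {S T : Subalgebra k A} (hS : IsHopfSubalgebra S) (hT : IsHopfSubalgebra T) :
    IsHopfSubalgebra (S ⊔ T) := by
  obtain ⟨_, ⟨P⟩⟩ := hS.exists_hopfCover
  obtain ⟨_, ⟨Q⟩⟩ := hT.exists_hopfCover
  have cover := P.mul Q
  rw [Subalgebra.mul_toSubmodule] at cover
  exact cover.isHopfSubalgebra

theorem iSup_of_directed {ι : Type*} [Nonempty ι] {S : ι → Subalgebra k A}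
    (dir : Directed (· ≤ ·) S) (hS : ∀ i, IsHopfSubalgebra (S i)) :
    IsHopfSubalgebra (⨆ i, S i) := by
  classical
  choose _ P using fun i => (hS i).exists_hopfCover
  have cover := HopfCover.iSup fun i => (P i).some
  rw [← toSubmodule_iSup_of_directed dir] at cover
  exact cover.isHopfSubalgebra

end IsHopfSubalgebra

/-- Over a field `k`, for a commutative `k`-bialgebra `A` and Hopf
subalgebras `S₁, S₂` of `A`, the `k`-linear span `S₁·S₂` of products (the image of the
multiplication map `S₁ ⊗ S₂ → A`) is a subalgebra of `A` and a Hopf subalgebra containing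
`S₁` and `S₂`.  Consequently, the set of Hopf subalgebras of `A` is directed under
inclusion, and the union of all Hopf subalgebras of `A` is itself a Hopf subalgebra,
the largest one. -/
theorem hopfSubalgebra_product {k A : Type*} [Field k] [CommRing A] [Bialgebra k A]
    (S₁ S₂ : Subalgebra k A)
    (h₁ : IsHopfSubalgebra S₁) (h₂ : IsHopfSubalgebra S₂) :
    (∃ T : Subalgebra k A,
        Subalgebra.toSubmodule T = Subalgebra.toSubmodule S₁ * Subalgebra.toSubmodule S₂ ∧
        IsHopfSubalgebra T ∧ S₁ ≤ T ∧ S₂ ≤ T) ∧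
    DirectedOn (· ≤ ·) {S : Subalgebra k A | IsHopfSubalgebra S} ∧
    IsHopfSubalgebra (⨆ S : {S : Subalgebra k A // IsHopfSubalgebra S}, (S : Subalgebra k A)) ∧
    (∀ S : Subalgebra k A, IsHopfSubalgebra S →
      S ≤ ⨆ S' : {S' : Subalgebra k A // IsHopfSubalgebra S'}, (S' : Subalgebra k A)) := by
  have directed : DirectedOn (· ≤ ·) {S : Subalgebra k A | IsHopfSubalgebra S} :=
    fun S hS T hT => ⟨S ⊔ T, hS.sup hT, le_sup_left, le_sup_right⟩
  have : Nonempty {S : Subalgebra k A // IsHopfSubalgebra S} := ⟨S₁, h₁⟩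
  exact ⟨⟨S₁ ⊔ S₂, (Subalgebra.mul_toSubmodule S₁ S₂).symm, h₁.sup h₂, le_sup_left, le_sup_right⟩,
    directed, .iSup_of_directed directed.directed_val fun S => S.2,
    fun S hS => le_iSup_of_le ⟨S, hS⟩ le_rfl⟩
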